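/- For every p ≥ 1, every integer k ≥ 1, and every polynomial P on ℝ^k, one has ‖(−L)^{1/2} P‖_{L^p(γ_k)} ≤ 2 · ‖P‖_{L^p(γ_k)}^{1/2} · ‖LP‖_{L^p(γ_k)}^{1/2}. -/

import Mathlib

open MeasureTheory ProbabilityTheory Real

/-- The standard Gaussian measure on `ℝ^k`. -/
noncomputable def gaussMeasure (k : ℕ) : Measure (Fin k → ℝ) :=
  Measure.pi fun _ => gaussianReal 0 1

/-- The `L^p` norm with respect to the standard Gaussian measure on `ℝ^k`. -/
noncomputable def lpNormGauss {k : ℕ} (p : ℝ) (f : (Fin k → ℝ) → ℝ) : ℝ :=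
  (∫ x, |f x| ^ p ∂(gaussMeasure k)) ^ (1 / p)

/-- The Ornstein–Uhlenbeck operator `L P (x) = Δ P (x) - x · ∇P (x)` applied to a
polynomial on `ℝ^k`. -/
noncomputable def OU {k : ℕ} (P : MvPolynomial (Fin k) ℝ) (x : Fin k → ℝ) : ℝ :=
  (∑ j, MvPolynomial.eval x (MvPolynomial.pderiv j (MvPolynomial.pderiv j P)))
    - ∑ j, x j * MvPolynomial.eval x (MvPolynomial.pderiv j P)

/-- The multivariate probabilists' Hermite polynomial `H_α = ∏_j H_{α_j}(x_j)` as a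
polynomial on `ℝ^k`. -/
noncomputable def hermiteMv {k : ℕ} (α : Fin k →₀ ℕ) : MvPolynomial (Fin k) ℝ :=
  ∏ j, Polynomial.aeval (MvPolynomial.X j) (Polynomial.hermite (α j))

/-- The polynomial `P = ∑_α c_α H_α` with Hermite coefficients `c`. -/
noncomputable def hermExpansion {k : ℕ} (c : (Fin k →₀ ℕ) →₀ ℝ) : MvPolynomial (Fin k) ℝ :=
  ∑ α ∈ c.support, MvPolynomial.C (c α) * hermiteMv α

/-- `(-L)^{1/2} P`, defined on polynomials by `(-L)^{1/2} H_α = |α|^{1/2} H_α` extended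
linearly, evaluated at `x ∈ ℝ^k`. -/
noncomputable def sqrtNegL {k : ℕ} (c : (Fin k →₀ ℕ) →₀ ℝ) (x : Fin k → ℝ) : ℝ :=
  ∑ α ∈ c.support, Real.sqrt (∑ j, (α j : ℝ)) * c α * MvPolynomial.eval x (hermiteMv α)

/-- The Cauchy–Schlömilch substitution applied to the Gaussian integral. -/
theorem integral_exp_neg_sub_div_sq {a : ℝ} (ha : 0 < a) :
    ∫ u in Set.Ioi (0 : ℝ), exp (-(u - a / u) ^ 2) = √π / 2 := by
  have hder₁ : ∀ u ∈ Set.Ioi (0 : ℝ),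
      HasDerivWithinAt (fun u => a / u) (-(a / u ^ 2)) (Set.Ioi 0) u := by
    intro u hu
    have hu : u ≠ 0 := (Set.mem_Ioi.1 hu).ne'
    have := (hasDerivAt_inv hu).const_mul a
    refine (this.congr_deriv ?_).hasDerivWithinAt
    field_simp
  have hinj₁ : Set.InjOn (fun u => a / u) (Set.Ioi (0 : ℝ)) := by
    intro u hu v hv h
    have hu : 0 < u := hu
    have hv : 0 < v := hv
    simp only at h
    field_simp at h
    exact h.symm
  have himg₁ : (fun u => a / u) '' Set.Ioi (0 : ℝ) = Set.Ioi 0 := by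
    ext w
    constructor
    · rintro ⟨u, hu, rfl⟩
      exact div_pos ha hu
    · intro hw
      exact ⟨a / w, div_pos ha hw, by have : w ≠ 0 := (Set.mem_Ioi.1 hw).ne'; field_simp⟩
  have hder₂ : ∀ u ∈ Set.Ioi (0 : ℝ),
      HasDerivWithinAt (fun u => u - a / u) (1 + a / u ^ 2) (Set.Ioi 0) u := by
    intro u hu
    exact ((hasDerivWithinAt_id u _).sub (hder₁ u hu)).congr_deriv (by ring)
  have hinj₂ : Set.InjOn (fun u => u - a / u) (Set.Ioi (0 : ℝ)) := by
    intro u hu v hv h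
    have hu : 0 < u := hu
    have hv : 0 < v := hv
    have h' : (u - v) * (u * v + a) = 0 := by
      simp only at h
      field_simp at h
      linarith
    rcases mul_eq_zero.1 h' with h' | h'
    · linarith
    · have : 0 < u * v := mul_pos hu hv
      linarith
  have himg₂ : (fun u => u - a / u) '' Set.Ioi (0 : ℝ) = Set.univ := by
    refine Set.eq_univ_of_forall fun w => ?_
    have hs : √(w ^ 2 + 4 * a) ^ 2 = w ^ 2 + 4 * a := sq_sqrt (by positivity)
    have hlt : |w| < √(w ^ 2 + 4 * a) := by
      rw [← sqrt_sq_eq_abs]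
      exact sqrt_lt_sqrt (sq_nonneg w) (by linarith)
    have hpos : 0 < w + √(w ^ 2 + 4 * a) := by linarith [neg_abs_le w]
    refine ⟨(w + √(w ^ 2 + 4 * a)) / 2, half_pos hpos, ?_⟩
    simp only
    field_simp
    nlinarith
  have hJ : ∫ u in Set.Ioi (0 : ℝ), exp (-(u - a / u) ^ 2) =
      ∫ u in Set.Ioi (0 : ℝ), a / u ^ 2 * exp (-(u - a / u) ^ 2) := by
    have := integral_image_eq_integral_abs_deriv_smul measurableSet_Ioi hder₁ hinj₁
      (fun u => exp (-(u - a / u) ^ 2))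
    rw [himg₁] at this
    rw [this]
    refine setIntegral_congr_fun measurableSet_Ioi fun u hu => ?_
    have hu : 0 < u := hu
    have h1 : |(-(a / u ^ 2))| = a / u ^ 2 := by rw [abs_neg, abs_of_pos (by positivity)]
    have h2 : a / u - a / (a / u) = -(u - a / u) := by field_simp; ring
    simp only [h1, h2, smul_eq_mul, neg_sq]
  have habs : ∀ u ∈ Set.Ioi (0 : ℝ), |1 + a / u ^ 2| • exp (-(u - a / u) ^ 2) =
      exp (-(u - a / u) ^ 2) + a / u ^ 2 * exp (-(u - a / u) ^ 2) := by
    intro u hu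
    have hu : 0 < u := hu
    rw [abs_of_pos (by positivity), smul_eq_mul]
    ring
  have hgauss : Integrable (fun w : ℝ => exp (-w ^ 2)) := by
    simpa using integrable_exp_neg_mul_sq one_pos
  have hI : IntegrableOn (fun u => exp (-(u - a / u) ^ 2) + a / u ^ 2 * exp (-(u - a / u) ^ 2))
      (Set.Ioi (0 : ℝ)) := by
    have := (integrableOn_image_iff_integrableOn_abs_deriv_smul measurableSet_Ioi hder₂ hinj₂
      (fun w => exp (-w ^ 2))).1 (by rw [himg₂]; exact hgauss.integrableOn)
    exact this.congr_fun habs measurableSet_Ioi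
  have hI₁ : IntegrableOn (fun u => exp (-(u - a / u) ^ 2)) (Set.Ioi (0 : ℝ)) := by
    refine Integrable.mono' hI (by fun_prop) ?_
    refine (ae_restrict_iff' measurableSet_Ioi).2 (Filter.Eventually.of_forall fun u hu => ?_)
    have hu : 0 < u := hu
    rw [norm_of_nonneg (exp_pos _).le]
    exact le_add_of_nonneg_right (by positivity)
  have hI₂ : IntegrableOn (fun u => a / u ^ 2 * exp (-(u - a / u) ^ 2)) (Set.Ioi (0 : ℝ)) :=
    (hI.sub hI₁).congr (Filter.Eventually.of_forall fun u => by simp)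
  have hsum := integral_image_eq_integral_abs_deriv_smul measurableSet_Ioi hder₂ hinj₂
    (fun w => exp (-w ^ 2))
  rw [himg₂, setIntegral_univ, setIntegral_congr_fun measurableSet_Ioi habs,
    integral_add hI₁ hI₂, ← hJ] at hsum
  have hg : ∫ w : ℝ, exp (-w ^ 2) = √π := by simpa using integral_gaussian 1
  linarith

/-- Subordination: `exp (-t √μ)` is a mixture of the exponentials `exp (-s μ)`. -/
theorem integral_exp_neg_sq_mul_exp {t : ℝ} (ht : 0 < t) {μ : ℝ} (hμ : 0 ≤ μ) :
    ∫ u in Set.Ioi (0 : ℝ), exp (-u ^ 2) * exp (-(t ^ 2 / (4 * u ^ 2)) * μ) =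
      √π / 2 * exp (-t * √μ) := by
  rcases hμ.eq_or_lt with rfl | hμ
  · simpa using integral_gaussian_Ioi 1
  · have hsq : √μ ^ 2 = μ := sq_sqrt hμ.le
    have ha : 0 < t * √μ / 2 := by positivity
    rw [← integral_exp_neg_sub_div_sq ha, ← integral_mul_const]
    refine setIntegral_congr_fun measurableSet_Ioi fun u hu => ?_
    have hu : u ≠ 0 := (Set.mem_Ioi.1 hu).ne'
    simp only [← exp_add]
    congr 1
    field_simp
    linear_combination (4 * t ^ 2) * hsq

section Landau

variable {E ι : Type*} [NormedAddCommGroup E] [NormedSpace ℝ E]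

/-- If the diagonal semigroup with eigenvalues `exp (-s μ i)` is contractive, so is the subordinated
one with eigenvalues `exp (-t √(μ i))`. -/
theorem norm_sum_exp_neg_sqrt_le [CompleteSpace E] (S : Finset ι) (v : ι → E) (μ : ι → ℝ)
    (hμ : ∀ i, 0 ≤ μ i)
    (hT : ∀ s : ℝ, 0 ≤ s → ∀ d : ι → ℝ,
      ‖∑ i ∈ S, (d i * exp (-s * μ i)) • v i‖ ≤ ‖∑ i ∈ S, d i • v i‖)
    {t : ℝ} (ht : 0 ≤ t) (d : ι → ℝ) :
    ‖∑ i ∈ S, (d i * exp (-t * √(μ i))) • v i‖ ≤ ‖∑ i ∈ S, d i • v i‖ := by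
  rcases ht.eq_or_lt with rfl | ht
  · simp
  have hgauss : IntegrableOn (fun u : ℝ => exp (-u ^ 2)) (Set.Ioi 0) := by
    simpa using (integrable_exp_neg_mul_sq one_pos).integrableOn
  have hint : ∀ i, IntegrableOn
      (fun u : ℝ => exp (-u ^ 2) * exp (-(t ^ 2 / (4 * u ^ 2)) * μ i)) (Set.Ioi 0) := by
    intro i
    refine Integrable.mono' hgauss (by fun_prop) (Filter.Eventually.of_forall fun u => ?_)
    rw [norm_of_nonneg (by positivity)]
    refine mul_le_of_le_one_right (exp_pos _).le (exp_le_one_iff.2 ?_)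
    have : 0 ≤ t ^ 2 / (4 * u ^ 2) * μ i := mul_nonneg (by positivity) (hμ i)
    linarith
  have hrep : (√π / 2) • ∑ i ∈ S, (d i * exp (-t * √(μ i))) • v i =
      ∫ u in Set.Ioi (0 : ℝ), exp (-u ^ 2) •
        ∑ i ∈ S, (d i * exp (-(t ^ 2 / (4 * u ^ 2)) * μ i)) • v i := by
    have : ∀ u : ℝ, exp (-u ^ 2) • ∑ i ∈ S, (d i * exp (-(t ^ 2 / (4 * u ^ 2)) * μ i)) • v i =
        ∑ i ∈ S, (exp (-u ^ 2) * exp (-(t ^ 2 / (4 * u ^ 2)) * μ i)) • d i • v i := by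
      intro u
      simp only [Finset.smul_sum, smul_smul]
      refine Finset.sum_congr rfl fun i _ => ?_
      congr 1
      ring
    simp only [this]
    rw [integral_finsetSum _ fun i _ => (hint i).smul_const _, Finset.smul_sum]
    refine Finset.sum_congr rfl fun i _ => ?_
    rw [integral_smul_const, integral_exp_neg_sq_mul_exp ht (hμ i), smul_smul, smul_smul]
    congr 1
    ring
  have hle : ‖(√π / 2) • ∑ i ∈ S, (d i * exp (-t * √(μ i))) • v i‖ ≤
      ∫ u in Set.Ioi (0 : ℝ), exp (-u ^ 2) * ‖∑ i ∈ S, d i • v i‖ := by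
    rw [hrep]
    refine norm_integral_le_of_norm_le (hgauss.mul_const _) (Filter.Eventually.of_forall fun u => ?_)
    rw [norm_smul, norm_of_nonneg (exp_pos _).le]
    exact mul_le_mul_of_nonneg_left (hT _ (by positivity) d) (exp_pos _).le
  have hg : ∫ u in Set.Ioi (0 : ℝ), exp (-u ^ 2) = √π / 2 := by
    simpa using integral_gaussian_Ioi 1
  rw [integral_mul_const, hg, norm_smul, norm_of_nonneg (by positivity)] at hle
  exact le_of_mul_le_mul_left hle (by positivity)

/-- Landau's inequality for a diagonal contraction semigroup with eigenvalues `exp (-t b i)`. -/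
theorem norm_sum_generator_sq_le (S : Finset ι) (v : ι → E) (b d : ι → ℝ)
    (hQ : ∀ t : ℝ, 0 ≤ t → ∀ d : ι → ℝ,
      ‖∑ i ∈ S, (d i * exp (-t * b i)) • v i‖ ≤ ‖∑ i ∈ S, d i • v i‖) :
    ‖∑ i ∈ S, (b i * d i) • v i‖ ^ 2 ≤
      4 * ‖∑ i ∈ S, d i • v i‖ * ‖∑ i ∈ S, (b i ^ 2 * d i) • v i‖ := by
  set D := ‖∑ i ∈ S, (b i * d i) • v i‖
  set N := ‖∑ i ∈ S, d i • v i‖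
  set M := ‖∑ i ∈ S, (b i ^ 2 * d i) • v i‖
  have hexp : ∀ (i : ι) (t : ℝ), HasDerivAt (fun t => exp (-t * b i)) (-b i * exp (-t * b i)) t := by
    intro i t
    have := ((hasDerivAt_neg t).mul_const (b i)).exp
    exact this.congr_deriv (by ring)
  let g₁ : ℝ → E := fun t => ∑ i ∈ S, (b i * d i * (1 - exp (-t * b i))) • v i
  let g : ℝ → E := fun t => ∑ i ∈ S, (d i * (exp (-t * b i) - 1 + t * b i)) • v i
  have hg₁ : ∀ t, HasDerivAt g₁ (∑ i ∈ S, (b i ^ 2 * d i * exp (-t * b i)) • v i) t := by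
    intro t
    refine HasDerivAt.fun_sum fun i _ => ?_
    have := (((hexp i t).const_sub 1).const_mul (b i * d i)).smul_const (v i)
    exact this.congr_deriv (by congr 1; ring)
  have hg : ∀ t, HasDerivAt g (g₁ t) t := by
    intro t
    refine HasDerivAt.fun_sum fun i _ => ?_
    have := ((((hexp i t).sub_const 1).add ((hasDerivAt_id t).mul_const (b i))).const_mul
      (d i)).smul_const (v i)
    exact this.congr_deriv (by congr 1; ring)
  have hb₁ : ∀ t, 0 ≤ t → ‖g₁ t‖ ≤ M * t := by
    intro t ht
    have := norm_image_sub_le_of_norm_deriv_le_segment' (f := g₁) (a := 0) (b := t) (C := M)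
      (fun s _ => (hg₁ s).hasDerivWithinAt) (fun s hs => hQ s hs.1 _) t ⟨ht, le_rfl⟩
    simpa [g₁] using this
  have hb : ∀ t, 0 ≤ t → ‖g t‖ ≤ M * t ^ 2 / 2 := by
    intro t ht
    refine image_norm_le_of_norm_deriv_right_le_deriv_boundary (f := g) (f' := g₁) (a := 0) (b := t)
      (B := fun s => M * s ^ 2 / 2) (B' := fun s => M * s)
      (fun s _ => (hg s).continuousAt.continuousWithinAt)
      (fun s _ => (hg s).hasDerivWithinAt) (by simp [g])
      (fun s => ?_) (fun s hs => hb₁ s hs.1) ⟨ht, le_rfl⟩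
    exact (((hasDerivAt_pow 2 s).const_mul M).div_const 2).congr_deriv (by norm_num; ring)
  have hkey : ∀ t, 0 ≤ t → t * D ≤ 2 * N + M * t ^ 2 / 2 := by
    intro t ht
    have heq : t • ∑ i ∈ S, (b i * d i) • v i =
        g t + ∑ i ∈ S, d i • v i - ∑ i ∈ S, (d i * exp (-t * b i)) • v i := by
      simp only [g, Finset.smul_sum, ← Finset.sum_add_distrib, ← Finset.sum_sub_distrib, smul_smul,
        ← add_smul, ← sub_smul]
      refine Finset.sum_congr rfl fun i _ => ?_
      congr 1
      ring
    have hnorm : t * D = ‖t • ∑ i ∈ S, (b i * d i) • v i‖ := by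
      rw [norm_smul, norm_of_nonneg ht]
    rw [hnorm, heq]
    linarith [norm_sub_le (g t + ∑ i ∈ S, d i • v i) (∑ i ∈ S, (d i * exp (-t * b i)) • v i),
      norm_add_le (g t) (∑ i ∈ S, d i • v i), hQ t ht d, hb t ht]
  have hD0 : 0 ≤ D := norm_nonneg _
  have hN0 : 0 ≤ N := norm_nonneg _
  have hM0 : 0 ≤ M := norm_nonneg _
  rcases hM0.eq_or_lt with h0 | hpos
  · have hD' : D = 0 := by
      by_contra hne
      have hDpos : 0 < D := lt_of_le_of_ne hD0 (Ne.symm hne)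
      have := hkey ((2 * N + 1) / D) (by positivity)
      rw [div_mul_cancel₀ _ hne, ← h0] at this
      linarith
    rw [hD', ← h0]
    simp
  · have := hkey (D / M) (by positivity)
    have hM' : M * (D / M) ^ 2 = D / M * D := by field_simp
    have hle : D / M * D ≤ 4 * N := by linarith
    calc D ^ 2 = D / M * D * M := by field_simp
      _ ≤ 4 * N * M := mul_le_mul_of_nonneg_right hle hM0

end Landau

theorem derivative_hermite_succ (n : ℕ) :
    Polynomial.derivative (Polynomial.hermite (n + 1)) = (n + 1 : ℤ) • Polynomial.hermite n := by
  induction n with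
  | zero => simp
  | succ n ih =>
    rw [Polynomial.hermite_succ (n + 1), Polynomial.derivative_sub, Polynomial.derivative_mul, ih,
      Polynomial.derivative_smul, Polynomial.derivative_X, Polynomial.hermite_succ n]
    simp only [zsmul_eq_mul]
    push_cast
    ring

/-- The Hermite differential equation. -/
theorem derivative_derivative_hermite (n : ℕ) :
    Polynomial.derivative (Polynomial.derivative (Polynomial.hermite n)) =
      Polynomial.X * Polynomial.derivative (Polynomial.hermite n) -
        (n : ℤ) • Polynomial.hermite n := by
  cases n with
  | zero => simp
  | succ n =>
    rw [derivative_hermite_succ, Polynomial.derivative_smul, Polynomial.hermite_succ n]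
    simp only [zsmul_eq_mul]
    push_cast
    ring

theorem integrable_eval_gaussianReal (q : Polynomial ℝ) :
    Integrable (fun x => q.eval x) (gaussianReal 0 1) := by
  simp only [Polynomial.eval_eq_sum_range]
  refine integrable_finsetSum _ fun i _ => Integrable.const_mul ?_ _
  have := (memLp_id_gaussianReal (μ := 0) (v := 1) i).integrable_norm_pow'
  exact (integrable_norm_iff (by fun_prop)).1 (by simpa using this)

/-- Gaussian integration by parts for polynomials. -/
theorem integral_mul_eval_gaussianReal (q : Polynomial ℝ) :
    ∫ x, x * q.eval x ∂gaussianReal 0 1 = ∫ x, q.derivative.eval x ∂gaussianReal 0 1 := by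
  have hint : ∀ q : Polynomial ℝ, Integrable fun x => gaussianPDFReal 0 1 x * q.eval x := by
    intro q
    have := integrable_eval_gaussianReal q
    rw [gaussianReal_of_var_ne_zero 0 one_ne_zero, integrable_withDensity_iff_integrable_smul'
      (measurable_gaussianPDF _ _) (ae_of_all _ fun _ => gaussianPDF_lt_top)] at this
    simpa using this
  have hpdf : ∀ x, HasDerivAt (gaussianPDFReal 0 1) (-x * gaussianPDFReal 0 1 x) x := by
    intro x
    rw [gaussianPDFReal_def]
    have := (((hasDerivAt_pow 2 x).neg.div_const 2).exp).const_mul (√(2 * π))⁻¹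
    simp only [sub_zero, NNReal.coe_one, mul_one]
    exact this.congr_deriv (by simp only [Pi.neg_apply]; push_cast; ring)
  have hzero := integral_eq_zero_of_hasDerivAt_of_integrable
    (f := fun x => gaussianPDFReal 0 1 x * q.eval x)
    (f' := fun x => gaussianPDFReal 0 1 x * (q.derivative - Polynomial.X * q).eval x)
    (fun x => ((hpdf x).mul (q.hasDerivAt x)).congr_deriv (by simp; ring)) (hint _) (hint _)
  have hsub : ∫ x, (q.derivative.eval x - x * q.eval x) ∂gaussianReal 0 1 = 0 := by
    rw [integral_gaussianReal_eq_integral_smul one_ne_zero]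
    simpa using hzero
  have hXq : Integrable (fun x => x * q.eval x) (gaussianReal 0 1) :=
    (integrable_eval_gaussianReal (Polynomial.X * q)).congr
      (Filter.Eventually.of_forall fun x => by simp)
  rw [integral_sub (integrable_eval_gaussianReal _) hXq] at hsub
  linarith

/-- Mehler's formula in dimension one. -/
theorem integral_aeval_hermite_gaussianReal {a b : ℝ} (hab : a ^ 2 + b ^ 2 = 1) (n : ℕ) (x : ℝ) :
    ∫ y, Polynomial.aeval (a * x + b * y) (Polynomial.hermite n) ∂gaussianReal 0 1 =
      a ^ n * Polynomial.aeval x (Polynomial.hermite n) := by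
  induction n using Nat.strong_induction_on with
  | _ n ih =>
    cases n with
    | zero => simp
    | succ n =>
      set ℓ : Polynomial ℝ := Polynomial.C (a * x) + Polynomial.C b * Polynomial.X with hℓ
      have hcomp : ∀ (P : Polynomial ℤ) (y : ℝ), Polynomial.aeval (a * x + b * y) P =
          ((P.map (Int.castRingHom ℝ)).comp ℓ).eval y := by
        intro P y
        simp [hℓ, Polynomial.aeval_def, Polynomial.eval₂_eq_eval_map, Polynomial.eval_comp]
      have hI : ∀ P : Polynomial ℤ, Integrable (fun y : ℝ => Polynomial.aeval (a * x + b * y) P)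
          (gaussianReal 0 1) := by
        intro P
        simp only [hcomp]
        exact integrable_eval_gaussianReal _
      have hyI : ∀ P : Polynomial ℤ,
          Integrable (fun y : ℝ => y * Polynomial.aeval (a * x + b * y) P) (gaussianReal 0 1) := by
        intro P
        simp only [hcomp]
        exact (integrable_eval_gaussianReal
          (Polynomial.X * ((P.map (Int.castRingHom ℝ)).comp ℓ))).congr
            (Filter.Eventually.of_forall fun y => by simp)
      have hparts : ∀ P : Polynomial ℤ,
          ∫ y, y * Polynomial.aeval (a * x + b * y) P ∂gaussianReal 0 1 =
            b * ∫ y, Polynomial.aeval (a * x + b * y) (Polynomial.derivative P)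
              ∂gaussianReal 0 1 := by
        intro P
        simp only [hcomp]
        rw [integral_mul_eval_gaussianReal, ← integral_const_mul]
        refine integral_congr_ae (Filter.Eventually.of_forall fun y => ?_)
        simp [hℓ, Polynomial.derivative_comp, Polynomial.derivative_map]
      have hder : (∫ y, Polynomial.aeval (a * x + b * y)
            (Polynomial.derivative (Polynomial.hermite n)) ∂gaussianReal 0 1) * a =
          a ^ n * Polynomial.aeval x (Polynomial.derivative (Polynomial.hermite n)) := by
        cases n with
        | zero => simp
        | succ m =>
          simp only [derivative_hermite_succ, map_zsmul]
          simp only [zsmul_eq_mul]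
          rw [integral_const_mul, ih m (by omega)]
          ring
      have hsplit : ∀ y : ℝ, Polynomial.aeval (a * x + b * y) (Polynomial.hermite (n + 1)) =
          a * x * Polynomial.aeval (a * x + b * y) (Polynomial.hermite n) +
            b * (y * Polynomial.aeval (a * x + b * y) (Polynomial.hermite n)) -
            Polynomial.aeval (a * x + b * y) (Polynomial.derivative (Polynomial.hermite n)) := by
        intro y
        simp only [Polynomial.hermite_succ, map_sub, map_mul, Polynomial.aeval_X]
        ring
      simp only [hsplit]
      rw [integral_sub (by exact ((hI _).const_mul _).add ((hyI _).const_mul _)) (hI _),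
        integral_add ((hI _).const_mul _) ((hyI _).const_mul _), integral_const_mul,
        integral_const_mul, hparts, ih n (by omega), Polynomial.hermite_succ, map_sub, map_mul,
        Polynomial.aeval_X]
      linear_combination (-a) * hder + (∫ y, Polynomial.aeval (a * x + b * y)
            (Polynomial.derivative (Polynomial.hermite n)) ∂gaussianReal 0 1) * hab

instance isProbabilityMeasure_gaussMeasure (k : ℕ) : IsProbabilityMeasure (gaussMeasure k) := by
  unfold gaussMeasure
  infer_instance

theorem memLp_eval_gaussMeasure {k : ℕ} (P : MvPolynomial (Fin k) ℝ) (q : NNReal) :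
    MemLp (fun x => MvPolynomial.eval x P) q (gaussMeasure k) := by
  induction P using MvPolynomial.induction_on generalizing q with
  | C a => simpa using memLp_const a
  | add P Q hP hQ => simpa [Pi.add_def] using (hP q).add (hQ q)
  | mul_X P j hP =>
    have : ENNReal.HolderTriple ((2 * q : NNReal) : ENNReal) ((2 * q : NNReal) : ENNReal) q := by
      refine ⟨?_⟩
      rw [ENNReal.coe_mul, ENNReal.mul_inv (by simp) (by simp), ← add_mul]
      simp [ENNReal.inv_two_add_inv_two]
    have hX : MemLp (fun x : Fin k → ℝ => x j) (2 * q : NNReal) (gaussMeasure k) :=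
      (memLp_id_gaussianReal (μ := 0) (v := 1) (2 * q)).comp_measurePreserving
        (measurePreserving_eval (fun _ : Fin k => gaussianReal 0 1) j)
    simpa using hX.mul' (hP (2 * q)) (r := q)

theorem integrable_eval_gaussMeasure {k : ℕ} (P : MvPolynomial (Fin k) ℝ) :
    Integrable (fun x => MvPolynomial.eval x P) (gaussMeasure k) :=
  memLp_one_iff_integrable.1 (by simpa using memLp_eval_gaussMeasure P 1)

theorem integrable_abs_eval_rpow_gaussMeasure {k : ℕ} (P : MvPolynomial (Fin k) ℝ) {p : ℝ}
    (hp : 0 ≤ p) : Integrable (fun x => |MvPolynomial.eval x P| ^ p) (gaussMeasure k) := by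
  have := (memLp_eval_gaussMeasure P p.toNNReal).integrable_norm_rpow'
  simpa [hp] using this

/-- A rotation of two independent standard Gaussian vectors is standard Gaussian. -/
theorem measurePreserving_rotation_gaussMeasure {a b : ℝ} (hab : a ^ 2 + b ^ 2 = 1) (k : ℕ) :
    MeasurePreserving (fun z : (Fin k → ℝ) × (Fin k → ℝ) => fun j => a * z.1 j + b * z.2 j)
      ((gaussMeasure k).prod (gaussMeasure k)) (gaussMeasure k) := by
  have hone : MeasurePreserving (fun z : ℝ × ℝ => a * z.1 + b * z.2)
      ((gaussianReal 0 1).prod (gaussianReal 0 1)) (gaussianReal 0 1) := by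
    refine ⟨by fun_prop, ?_⟩
    have h : (gaussianReal 0 1).map (a * ·) ∗ (gaussianReal 0 1).map (b * ·) = gaussianReal 0 1 := by
      rw [gaussianReal_map_const_mul, gaussianReal_map_const_mul, gaussianReal_conv_gaussianReal]
      congr 1
      · simp
      · ext
        simpa using hab
    rw [Measure.conv, Measure.map_prod_map _ _ (by fun_prop) (by fun_prop),
      Measure.map_map (by fun_prop) (by fun_prop)] at h
    exact h
  have harrow := (measurePreserving_arrowProdEquivProdArrow ℝ ℝ (Fin k)
    (fun _ => gaussianReal 0 1) (fun _ => gaussianReal 0 1)).symm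
  exact (measurePreserving_pi (fun _ : Fin k => (gaussianReal 0 1).prod (gaussianReal 0 1))
    (fun _ => gaussianReal 0 1) fun _ => hone).comp harrow

theorem exists_eval_affine {k : ℕ} (P : MvPolynomial (Fin k) ℝ) (a b : ℝ) (x : Fin k → ℝ) :
    ∃ Q : MvPolynomial (Fin k) ℝ, ∀ y,
      MvPolynomial.eval (fun j => a * x j + b * y j) P = MvPolynomial.eval y Q := by
  refine ⟨MvPolynomial.bind₁ (fun j => MvPolynomial.C (a * x j) +
    MvPolynomial.C b * MvPolynomial.X j) P, fun y => ?_⟩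
  simp only [← MvPolynomial.coe_aeval_eq_eval, RingHom.coe_coe, MvPolynomial.aeval_bind₁]
  simp

/-- Averaging over a rotated independent copy is a contraction for the `p`-th absolute moment. -/
theorem integral_abs_integral_rotation_rpow_le {k : ℕ} {a b : ℝ} (hab : a ^ 2 + b ^ 2 = 1) {p : ℝ}
    (hp : 1 ≤ p) (P : MvPolynomial (Fin k) ℝ) :
    ∫ x, |∫ y, MvPolynomial.eval (fun j => a * x j + b * y j) P ∂gaussMeasure k| ^ p
        ∂gaussMeasure k ≤
      ∫ x, |MvPolynomial.eval x P| ^ p ∂gaussMeasure k := by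
  have hp0 : 0 ≤ p := by linarith
  have hrot := measurePreserving_rotation_gaussMeasure hab k
  have hI := integrable_abs_eval_rpow_gaussMeasure P hp0
  have hprod : Integrable (fun z : (Fin k → ℝ) × (Fin k → ℝ) =>
      |MvPolynomial.eval (fun j => a * z.1 j + b * z.2 j) P| ^ p)
      ((gaussMeasure k).prod (gaussMeasure k)) := hrot.integrable_comp_of_integrable hI
  calc
    _ ≤ ∫ x, ∫ y, |MvPolynomial.eval (fun j => a * x j + b * y j) P| ^ p ∂gaussMeasure k
          ∂gaussMeasure k := by
      refine integral_mono_of_nonneg (Filter.Eventually.of_forall fun x => by positivity)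
        hprod.integral_prod_left (Filter.Eventually.of_forall fun x => ?_)
      obtain ⟨Q, hQ⟩ := exists_eval_affine P a b x
      simp only [hQ]
      calc
        _ ≤ (∫ y, |MvPolynomial.eval y Q| ∂gaussMeasure k) ^ p :=
          rpow_le_rpow (abs_nonneg _) (abs_integral_le_integral_abs) hp0
        _ ≤ _ := (convexOn_rpow hp).map_integral_le
          (continuousOn_id.rpow_const fun _ _ => Or.inr hp0) isClosed_Ici
          (Filter.Eventually.of_forall fun y => Set.mem_Ici.2 (abs_nonneg _))
          (integrable_eval_gaussMeasure Q).abs (integrable_abs_eval_rpow_gaussMeasure Q hp0)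
    _ = ∫ z, |MvPolynomial.eval (fun j => a * z.1 j + b * z.2 j) P| ^ p
          ∂(gaussMeasure k).prod (gaussMeasure k) := (integral_prod _ hprod).symm
    _ = _ := by
      have := integral_map (f := fun x => |MvPolynomial.eval x P| ^ p)
        hrot.measurable.aemeasurable (by rw [hrot.map_eq]; exact hI.aestronglyMeasurable)
      rw [hrot.map_eq] at this
      exact this.symm

theorem eval_hermiteMv {k : ℕ} (α : Fin k →₀ ℕ) (x : Fin k → ℝ) :
    MvPolynomial.eval x (hermiteMv α) =
      ∏ j, Polynomial.aeval (x j) (Polynomial.hermite (α j)) := by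
  rw [hermiteMv, map_prod]
  refine Finset.prod_congr rfl fun j _ => ?_
  have := Polynomial.aeval_algHom_apply ((MvPolynomial.aeval x : MvPolynomial (Fin k) ℝ →ₐ[ℝ] ℝ)
    |>.restrictScalars ℤ) (MvPolynomial.X j) (Polynomial.hermite (α j))
  simpa [MvPolynomial.aeval_eq_eval] using this.symm

/-- Mehler's formula for multivariate Hermite polynomials. -/
theorem integral_eval_hermiteMv {k : ℕ} {a b : ℝ} (hab : a ^ 2 + b ^ 2 = 1) (α : Fin k →₀ ℕ)
    (x : Fin k → ℝ) :
    ∫ y, MvPolynomial.eval (fun j => a * x j + b * y j) (hermiteMv α) ∂gaussMeasure k =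
      a ^ (∑ j, α j) * MvPolynomial.eval x (hermiteMv α) := by
  simp only [eval_hermiteMv]
  rw [gaussMeasure, integral_fintype_prod_eq_prod
    (fun j y => Polynomial.aeval (a * x j + b * y) (Polynomial.hermite (α j)))]
  simp only [integral_aeval_hermite_gaussianReal hab, Finset.prod_mul_distrib,
    Finset.prod_pow_eq_pow_sum]

/-- The Ornstein–Uhlenbeck semigroup is a contraction for the `p`-th absolute moment. -/
theorem integral_abs_sum_exp_hermiteMv_le {k : ℕ} {p : ℝ} (hp : 1 ≤ p) {s : ℝ} (hs : 0 ≤ s)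
    (S : Finset (Fin k →₀ ℕ)) (d : (Fin k →₀ ℕ) → ℝ) :
    ∫ x, |∑ α ∈ S, d α * exp (-s * ∑ j, (α j : ℝ)) * MvPolynomial.eval x (hermiteMv α)| ^ p
        ∂gaussMeasure k ≤
      ∫ x, |∑ α ∈ S, d α * MvPolynomial.eval x (hermiteMv α)| ^ p ∂gaussMeasure k := by
  have hle : exp (-s) ^ 2 ≤ 1 := pow_le_one₀ (exp_pos _).le (exp_le_one_iff.2 (by linarith))
  have hab : exp (-s) ^ 2 + √(1 - exp (-s) ^ 2) ^ 2 = 1 := by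
    rw [sq_sqrt (by linarith)]
    ring
  have hmain := integral_abs_integral_rotation_rpow_le hab hp
    (∑ α ∈ S, MvPolynomial.C (d α) * hermiteMv α)
  have hI : ∀ (x : Fin k → ℝ) (α : Fin k →₀ ℕ), Integrable (fun y : Fin k → ℝ =>
      MvPolynomial.eval (fun j => exp (-s) * x j + √(1 - exp (-s) ^ 2) * y j) (hermiteMv α))
      (gaussMeasure k) := by
    intro x α
    obtain ⟨Q, hQ⟩ := exists_eval_affine (hermiteMv α) (exp (-s)) (√(1 - exp (-s) ^ 2)) x
    simp only [hQ]
    exact integrable_eval_gaussMeasure Q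
  have hmehler : ∀ x : Fin k → ℝ, ∫ y, MvPolynomial.eval
      (fun j => exp (-s) * x j + √(1 - exp (-s) ^ 2) * y j)
        (∑ α ∈ S, MvPolynomial.C (d α) * hermiteMv α) ∂gaussMeasure k =
      ∑ α ∈ S, d α * exp (-s * ∑ j, (α j : ℝ)) * MvPolynomial.eval x (hermiteMv α) := by
    intro x
    simp only [map_sum, map_mul, MvPolynomial.eval_C]
    rw [integral_finsetSum _ fun α _ => (hI x α).const_mul _]
    refine Finset.sum_congr rfl fun α _ => ?_
    rw [integral_const_mul, integral_eval_hermiteMv hab, ← exp_nat_mul, mul_assoc]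
    push_cast
    rw [mul_comm (∑ j, (α j : ℝ))]
  simp only [hmehler] at hmain
  simpa using hmain

theorem pderiv_aeval_X_self {k : ℕ} (j : Fin k) (q : Polynomial ℤ) :
    MvPolynomial.pderiv j (Polynomial.aeval (MvPolynomial.X j : MvPolynomial (Fin k) ℝ) q) =
      Polynomial.aeval (MvPolynomial.X j) (Polynomial.derivative q) := by
  have := ((MvPolynomial.pderiv j : Derivation ℝ (MvPolynomial (Fin k) ℝ) _).restrictScalars
    ℤ).map_aeval q (MvPolynomial.X j)
  refine this.trans ?_
  simp

theorem pderiv_aeval_X_of_ne {k : ℕ} {i j : Fin k} (hij : i ≠ j) (q : Polynomial ℤ) :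
    MvPolynomial.pderiv j (Polynomial.aeval (MvPolynomial.X i : MvPolynomial (Fin k) ℝ) q) = 0 := by
  have := ((MvPolynomial.pderiv j : Derivation ℝ (MvPolynomial (Fin k) ℝ) _).restrictScalars
    ℤ).map_aeval q (MvPolynomial.X i)
  refine this.trans ?_
  simp [MvPolynomial.pderiv_X_of_ne hij]

theorem pderiv_aeval_mul_prod_erase {k : ℕ} (j : Fin k) (q : Polynomial ℤ)
    (r : Fin k → Polynomial ℤ) :
    MvPolynomial.pderiv j (Polynomial.aeval (MvPolynomial.X j : MvPolynomial (Fin k) ℝ) q *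
        ∏ i ∈ Finset.univ.erase j, Polynomial.aeval (MvPolynomial.X i) (r i)) =
      Polynomial.aeval (MvPolynomial.X j) (Polynomial.derivative q) *
        ∏ i ∈ Finset.univ.erase j, Polynomial.aeval (MvPolynomial.X i) (r i) := by
  have hprod : MvPolynomial.pderiv j (∏ i ∈ Finset.univ.erase j,
      Polynomial.aeval (MvPolynomial.X i : MvPolynomial (Fin k) ℝ) (r i)) = 0 := by
    refine Finset.prod_induction _ (fun Q => MvPolynomial.pderiv j Q = 0) (fun Q R hQ hR => ?_)
      (by simp) fun i hi => pderiv_aeval_X_of_ne (Finset.ne_of_mem_erase hi) _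
    rw [Derivation.leibniz, hQ, hR, smul_zero, smul_zero, add_zero]
  rw [Derivation.leibniz, hprod, pderiv_aeval_X_self, smul_zero, zero_add, smul_eq_mul, mul_comm]

/-- In each variable, a Hermite polynomial is an eigenfunction of the Ornstein–Uhlenbeck operator. -/
theorem pderiv_pderiv_hermiteMv {k : ℕ} (α : Fin k →₀ ℕ) (j : Fin k) :
    MvPolynomial.pderiv j (MvPolynomial.pderiv j (hermiteMv α)) =
      MvPolynomial.X j * MvPolynomial.pderiv j (hermiteMv α) - (α j : ℤ) • hermiteMv α := by
  have hsplit : hermiteMv α = Polynomial.aeval (MvPolynomial.X j) (Polynomial.hermite (α j)) *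
      ∏ i ∈ Finset.univ.erase j, Polynomial.aeval (MvPolynomial.X i)
        (Polynomial.hermite (α i)) :=
    (Finset.mul_prod_erase _ _ (Finset.mem_univ j)).symm
  rw [hsplit, pderiv_aeval_mul_prod_erase, pderiv_aeval_mul_prod_erase,
    derivative_derivative_hermite, map_sub, map_mul, map_zsmul, Polynomial.aeval_X]
  simp only [zsmul_eq_mul]
  ring

theorem OU_hermExpansion {k : ℕ} (c : (Fin k →₀ ℕ) →₀ ℝ) (x : Fin k → ℝ) :
    OU (hermExpansion c) x =
      -∑ α ∈ c.support, (∑ j, (α j : ℝ)) * c α * MvPolynomial.eval x (hermiteMv α) := by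
  simp only [OU, hermExpansion, map_sum, MvPolynomial.pderiv_C_mul, pderiv_pderiv_hermiteMv,
    map_mul, map_sub, map_zsmul, MvPolynomial.eval_C, MvPolynomial.eval_X]
  rw [← Finset.sum_sub_distrib, ← Finset.sum_neg_distrib]
  simp only [Finset.mul_sum, ← Finset.sum_sub_distrib]
  rw [Finset.sum_comm]
  refine Finset.sum_congr rfl fun α _ => ?_
  rw [Finset.sum_mul, Finset.sum_mul, ← Finset.sum_neg_distrib]
  refine Finset.sum_congr rfl fun j _ => ?_
  simp
  ring

/-- `H_α` as an element of `L^p(γ_k)`. -/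
noncomputable def hermiteLp {k : ℕ} (p : ℝ) (α : Fin k →₀ ℕ) :
    Lp ℝ (ENNReal.ofReal p) (gaussMeasure k) :=
  (memLp_eval_gaussMeasure (hermiteMv α) p.toNNReal).toLp

theorem norm_sum_hermiteLp {k : ℕ} {p : ℝ} (hp : 1 ≤ p) (S : Finset (Fin k →₀ ℕ))
    (d : (Fin k →₀ ℕ) → ℝ) :
    ‖∑ α ∈ S, d α • hermiteLp p α‖ =
      lpNormGauss p fun x => ∑ α ∈ S, d α * MvPolynomial.eval x (hermiteMv α) := by
  have hp0 : 0 < p := by linarith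
  set P : MvPolynomial (Fin k) ℝ := ∑ α ∈ S, MvPolynomial.C (d α) * hermiteMv α with hP
  have hmem : MemLp (fun x => MvPolynomial.eval x P) (ENNReal.ofReal p) (gaussMeasure k) :=
    memLp_eval_gaussMeasure P p.toNNReal
  have heval : ∀ x, MvPolynomial.eval x P =
      ∑ α ∈ S, d α * MvPolynomial.eval x (hermiteMv α) := by
    intro x
    simp [hP]
  have hcoe : ⇑(∑ α ∈ S, d α • hermiteLp p α) =ᵐ[gaussMeasure k]
      fun x => MvPolynomial.eval x P := by
    have hterm : ∀ᵐ x ∂gaussMeasure k, ∀ α ∈ S, (d α • hermiteLp p α : Lp ℝ _ _) x =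
        d α * MvPolynomial.eval x (hermiteMv α) := by
      refine (Finset.eventually_all S).2 fun α _ => ?_
      filter_upwards [Lp.coeFn_smul (d α) (hermiteLp p α),
        (memLp_eval_gaussMeasure (hermiteMv α) p.toNNReal).coeFn_toLp] with x hx hx'
      rw [hx, Pi.smul_apply, smul_eq_mul, hermiteLp]
      exact congrArg _ hx'
    filter_upwards [Lp.coeFn_fun_finsetSum S (fun α => d α • hermiteLp p α), hterm] with x hx hx'
    rw [hx, heval]
    exact Finset.sum_congr rfl hx'
  rw [Lp.norm_def, eLpNorm_congr_ae hcoe,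
    hmem.eLpNorm_eq_integral_rpow_norm (by simpa using hp0) ENNReal.ofReal_ne_top,
    ENNReal.toReal_ofReal (by positivity), ENNReal.toReal_ofReal hp0.le, lpNormGauss, one_div]
  simp only [heval, norm_eq_abs]

/-- `‖(-L)^{1/2} P‖_p ≤ 2 ‖P‖_p^{1/2} ‖LP‖_p^{1/2}`. -/
theorem sqrt_L_interpolation (p : ℝ) (hp : 1 ≤ p) (k : ℕ) (hk : 1 ≤ k)
    (c : (Fin k →₀ ℕ) →₀ ℝ) :
    lpNormGauss p (sqrtNegL c) ≤
      2 * (lpNormGauss p (fun x => MvPolynomial.eval x (hermExpansion c))) ^ ((1 : ℝ) / 2) *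
        (lpNormGauss p (OU (hermExpansion c))) ^ ((1 : ℝ) / 2) := by
  have : Fact (1 ≤ ENNReal.ofReal p) := ⟨by simpa using hp⟩
  have hcontr : ∀ s : ℝ, 0 ≤ s → ∀ d : (Fin k →₀ ℕ) → ℝ,
      ‖∑ α ∈ c.support, (d α * exp (-s * ∑ j, (α j : ℝ))) • hermiteLp p α‖ ≤
        ‖∑ α ∈ c.support, d α • hermiteLp p α‖ := by
    intro s hs d
    rw [norm_sum_hermiteLp hp, norm_sum_hermiteLp hp]
    exact rpow_le_rpow (integral_nonneg fun x => by positivity)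
      (integral_abs_sum_exp_hermiteMv_le hp hs _ d) (by positivity)
  have hnonneg : ∀ α : Fin k →₀ ℕ, 0 ≤ ∑ j, (α j : ℝ) := fun α => by positivity
  have hlandau := norm_sum_generator_sq_le c.support (hermiteLp p) (fun α => √(∑ j, (α j : ℝ))) c
    fun t ht d => norm_sum_exp_neg_sqrt_le c.support (hermiteLp p) _ hnonneg hcontr ht d
  simp only [sq_sqrt (hnonneg _), norm_sum_hermiteLp hp] at hlandau
  have hB : (fun x => ∑ α ∈ c.support, √(∑ j, (α j : ℝ)) * c α *
      MvPolynomial.eval x (hermiteMv α)) = sqrtNegL c := rfl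
  have hP : (fun x => ∑ α ∈ c.support, c α * MvPolynomial.eval x (hermiteMv α)) =
      fun x => MvPolynomial.eval x (hermExpansion c) := by
    funext x
    simp [hermExpansion]
  have hL : lpNormGauss p (fun x => ∑ α ∈ c.support, (∑ j, (α j : ℝ)) * c α *
      MvPolynomial.eval x (hermiteMv α)) = lpNormGauss p (OU (hermExpansion c)) := by
    simp only [lpNormGauss, OU_hermExpansion, abs_neg]
  rw [hB, hP, hL] at hlandau
  have hpos : ∀ f : (Fin k → ℝ) → ℝ, 0 ≤ lpNormGauss p f := fun f =>
    rpow_nonneg (integral_nonneg fun x => by positivity) _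
  rw [← sqrt_eq_rpow, ← sqrt_eq_rpow]
  refine abs_le_of_sq_le_sq' ?_ (by positivity) |>.2
  rw [mul_pow, mul_pow, sq_sqrt (hpos _), sq_sqrt (hpos _)]
  linarith
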